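/- Let p, q, a, b, c be positive integers and let s be a complex number with Re(s) > 1. Then S_{λ₃}(p,q,a,b,c,s) = (−1)^p Σ_{j=0}^{p} (−1)^j Λ(j;i) Σ_{ω=0}^{p−j} C(ω+a−1,ω) C(p+c−j−ω−1,c−1) T(q+a+ω, s, p+b+c−j−ω; −1, −i) + (−1)^{p+a} Σ_{j=0}^{c} Λ(j;i) Σ_{ω=0}^{c−j} C(ω+a−1,ω) C(p+c−j−ω−1,p−1) T(q, s+a+ω, p+b+c−j−ω; i, −1) + (−1)^p Σ_{j=0}^{a} Λ(j;i) Σ_{ω=0}^{p−1} C(ω+a−j,ω) C(p+c−2−ω,c−1) T(q+a−j+ω+1, s, p+b+c−1−ω; i, −i) + (−1)^{p+a} Σ_{j=0}^{a} (−1)^j Λ(j;i) Σ_{ω=0}^{c−1} C(ω+a−j,ω) C(p+c−2−ω,p−1) T(q, s+a−j+ω+1, p+b+c−1−ω; i, −i), where C(n,k) denotes the binomial coefficient. -/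

import Mathlib

open Complex Finset

/-- The primitive Dirichlet character of conductor 4 with values in `ℂ`. -/
noncomputable def chi4 : DirichletCharacter ℂ 4 := ZMod.χ₄.ringHomComp (Int.castRingHom ℂ)

/-- `L(s,χ₄)`, equal to `Σ_{m ≥ 0} (-1)^m (2m+1)^{-s}` at the relevant arguments. -/
noncomputable def Lchi4 (s : ℂ) : ℂ := DirichletCharacter.LFunction chi4 s

/-- `Λ(ξ;i)`: equal to `2^{1-ξ}(2^{1-ξ}-1)ζ(ξ)` for even `ξ`, and to
`2i L(ξ,χ₄)` for odd `ξ`. -/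
noncomputable def LamI (ξ : ℕ) : ℂ :=
  if Even ξ then (2 : ℂ) ^ ((1 : ℤ) - ξ) * ((2 : ℂ) ^ ((1 : ℤ) - ξ) - 1) * riemannZeta ξ
  else 2 * Complex.I * Lchi4 ξ

/-- `T(p,s,q;x,y) = Σ_{l ≠ 0, m ≥ 1, l+m ≠ 0} x^l y^m / (l^p m^s (l+m)^q)`. -/
noncomputable def T (p : ℕ) (s : ℂ) (q : ℕ) (x y : ℂ) : ℂ :=
  ∑' lm : ℤ × ℕ,
    if lm.1 ≠ 0 ∧ lm.1 + ((lm.2 : ℤ) + 1) ≠ 0 then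
      x ^ lm.1 * y ^ (lm.2 + 1) /
        ((lm.1 : ℂ) ^ p * (((lm.2 + 1 : ℕ) : ℂ)) ^ s *
          (((lm.1 + (lm.2 : ℤ) + 1 : ℤ) : ℂ)) ^ q)
    else 0

/-- Generic triple zeta-sum of type `A₃` with a weight `w` on `(l,m,n)`. -/
noncomputable def Z3 (w : ℕ → ℕ → ℕ → ℂ) (s₁ s₂ s₃ s₄ s₅ s₆ : ℂ) : ℂ :=
  ∑' t : ℕ × ℕ × ℕ,
    w (t.1 + 1) (t.2.1 + 1) (t.2.2 + 1) /
      ((((t.1 + 1 : ℕ) : ℂ)) ^ s₁ * (((t.2.1 + 1 : ℕ) : ℂ)) ^ s₂ *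
        (((t.2.2 + 1 : ℕ) : ℂ)) ^ s₃ * (((t.1 + 1 + (t.2.1 + 1) : ℕ) : ℂ)) ^ s₄ *
        (((t.2.1 + 1 + (t.2.2 + 1) : ℕ) : ℂ)) ^ s₅ *
        (((t.1 + 1 + (t.2.1 + 1) + (t.2.2 + 1) : ℕ) : ℂ)) ^ s₆)

/-- `ζ₃(s₁,…,s₆,λ₃∨;SU(4))`, with numerator `i^{l+2m+3n}`. -/
noncomputable def Zlam3 : ℂ → ℂ → ℂ → ℂ → ℂ → ℂ → ℂ :=
  Z3 (fun l m n => Complex.I ^ (l + 2 * m + 3 * n))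

/-- The twelve-term alternating combination `S` built from a six-variable zeta `Z`. -/
noncomputable def Scomb (Z : ℂ → ℂ → ℂ → ℂ → ℂ → ℂ → ℂ) (p q a b c : ℕ) (s : ℂ) : ℂ :=
  Z p q s a b c + (-1 : ℂ) ^ p * Z p a s q c b + (-1 : ℂ) ^ (p + a) * Z q a c p s b +
    (-1 : ℂ) ^ (p + a + c) * Z q s c b a p + (-1 : ℂ) ^ q * Z a q b p s c +
    (-1 : ℂ) ^ (q + b) * Z a s b c q p + (-1 : ℂ) ^ (q + a) * Z a p b q c s +
    (-1 : ℂ) ^ (q + a + b) * Z a c b s p q + (-1 : ℂ) ^ (q + a + b + c) * Z s c p a b q +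
    (-1 : ℂ) ^ (p + q + a) * Z q p c a b s + (-1 : ℂ) ^ (p + q + a + c) * Z q b c s p a +
    (-1 : ℂ) ^ (p + q + a + b + c) * Z s b p q c a

/-- The right-hand side `J₃` of the functional relation for `ζ₃(·,λ₃∨;SU(4))`. -/
noncomputable def J3 (p q a b c : ℕ) (s : ℂ) : ℂ :=
  (-1 : ℂ) ^ p * ∑ j ∈ range (p + 1), (-1 : ℂ) ^ j * LamI j *
      ∑ ω ∈ range (p - j + 1),
        (Nat.choose (ω + a - 1) ω : ℂ) * (Nat.choose (p + c - j - ω - 1) (c - 1) : ℂ) *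
          T (q + a + ω) s (p + b + c - j - ω) (-1) (-Complex.I) +
  (-1 : ℂ) ^ (p + a) * ∑ j ∈ range (c + 1), LamI j *
      ∑ ω ∈ range (c - j + 1),
        (Nat.choose (ω + a - 1) ω : ℂ) * (Nat.choose (p + c - j - ω - 1) (p - 1) : ℂ) *
          T q (s + a + ω) (p + b + c - j - ω) Complex.I (-1) +
  (-1 : ℂ) ^ p * ∑ j ∈ range (a + 1), LamI j *
      ∑ ω ∈ range p,
        (Nat.choose (ω + a - j) ω : ℂ) * (Nat.choose (p + c - 2 - ω) (c - 1) : ℂ) *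
          T (q + a - j + ω + 1) s (p + b + c - 1 - ω) Complex.I (-Complex.I) +
  (-1 : ℂ) ^ (p + a) * ∑ j ∈ range (a + 1), (-1 : ℂ) ^ j * LamI j *
      ∑ ω ∈ range c,
        (Nat.choose (ω + a - j) ω : ℂ) * (Nat.choose (p + c - 2 - ω) (p - 1) : ℂ) *
          T q (s + ((a - j : ℕ) : ℂ) + ω + 1) (p + b + c - 1 - ω) Complex.I (-Complex.I)

/-! Write `l = x₁ - x₂`, `m = x₂ - x₃` and `n = x₃ - x₄`. The six linear forms of the zeta-function
are then the differences `xᵢ - xⱼ` with `i < j`, and since `i⁴ = 1` the weight `i^(l + 2m + 3n)`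
equals `i^(x₁ + x₂ + x₃ + x₄ - 4 x₄)`, which is symmetric in the `xᵢ`. Hence the twelve signed
zeta-values of `Scomb` are the parts of a single sum over `l, m ∈ ℤ` and `n ≥ 1`, cut out by the
orderings of the `xᵢ` with `x₃ > x₄`.

For fixed `m` and `n` the sum over `l` has the form `∑ i^l R(l)` with a rational function `R`. It is
the sum of the residues of `R(w) ∑ i^l / (l - w)` at the poles `0`, `-m`, `-m - n` of `R`, and the
expansion of `∑ i^l / (l - w)` at an integer has the coefficients `Λ(j; i)` up to a power of `i`,
because `∑_{l ≠ 0} i^l / l^j = Λ(j; i)` for `j > 0`. Instead of contour integration, partial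
fractions reduce the residue formula to a single pole. Expanding the residues and summing over `m`
and `n` leaves the double series `T`. -/

section SymmetricSums

open Filter Topology SummationFilter

variable {E : Type*} [AddCommGroup E] [TopologicalSpace E] [IsTopologicalAddGroup E] {f : ℤ → E}

lemma hasSum_symmetricIcc_telescope (hf : Tendsto f cofinite (𝓝 0)) :
    HasSum (fun l ↦ f (l + 1) - f l) 0 (symmetricIcc ℤ) := by
  have hsum (N : ℕ) :
      ∑ l ∈ Icc (-(N : ℤ)) N, (f (l + 1) - f l) = f (N + 1) - f (-N) := by
    have h := sum_Ico_int_sub N f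
    rw [sum_sub_distrib] at h
    rw [sum_Icc_eq_sum_Ico_add _ (by lia), sum_sub_distrib, ← neg_sub, h]
    abel
  have hsucc : Function.Injective fun N : ℕ ↦ (N : ℤ) + 1 := fun M N h ↦ by simpa using h
  have hneg : Function.Injective fun N : ℕ ↦ -(N : ℤ) := fun M N h ↦ by simpa using h
  simpa [hasSum_symmetricIcc_iff, hsum, Nat.cofinite_eq_atTop] using
    (hf.comp hsucc.tendsto_cofinite).sub (hf.comp hneg.tendsto_cofinite)

lemma hasSum_symmetricIcc_comp_add_right {A : E} (h : HasSum f A (symmetricIcc ℤ))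
    (hf : Tendsto f cofinite (𝓝 0)) (k : ℤ) :
    HasSum (fun l ↦ f (l + k)) A (symmetricIcc ℤ) := by
  have hstep (k : ℤ) := hasSum_symmetricIcc_telescope
    (hf.comp (add_left_injective k).tendsto_cofinite)
  induction k using Int.induction_on with
  | zero => simpa using h
  | succ k ih => simpa [add_right_comm, add_assoc] using (hstep k).add ih
  | pred k ih => simpa [add_assoc] using ih.sub (hstep (-k - 1))

end SymmetricSums

section Residues

open PowerSeries LaurentSeries Filter Topology SummationFilter

/-- `Λ` is the power series `Λ(w) = w · ∑_{l ∈ ℤ} z ^ l / (l - w)`, the sum being taken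
symmetrically: its constant coefficient `-1` comes from the term `l = 0`, and expanding the other
terms in powers of `w` gives the remaining coefficients. -/
structure IsLerchSeries (z : ℂ) (Λ : ℂ⟦X⟧) : Prop where
  norm_eq_one : ‖z‖ = 1
  constantCoeff_eq : constantCoeff Λ = -1
  hasSum : ∀ p : ℕ, p ≠ 0 → HasSum (fun l : ℤ ↦ z ^ l / (l : ℂ) ^ p) (coeff p Λ) (symmetricIcc ℤ)

variable {ι : Type*} [Fintype ι] {z : ℂ} {Λ : ℂ⟦X⟧}

/-- The residue at `w = α i` of the function `Λ (w - α i) / (w - α i) * ∏ k, (w - α k) ^ (-p k)`,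
computed in the local parameter `X = w - α i`. -/
noncomputable def residue (Λ : ℂ⟦X⟧) (α : ι → ℤ) (p : ι → ℕ) (i : ι) : ℂ :=
  ((Λ : ℂ⸨X⸩) * ∏ k, ((X + C (α i - α k : ℂ) : ℂ⟦X⟧) : ℂ⸨X⸩)⁻¹ ^ p k).coeff 0

lemma X_add_C_ne_zero (r : ℂ) : (X + C r : ℂ⟦X⟧) ≠ 0 := fun h ↦ by
  simpa [coeff_X, coeff_C] using congrArg (coeff 1) h

lemma coe_inv_X_add_C {r : ℂ} (hr : r ≠ 0) :
    (((X + C r)⁻¹ : ℂ⟦X⟧) : ℂ⸨X⸩) = ((X + C r : ℂ⟦X⟧) : ℂ⸨X⸩)⁻¹ := by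
  refine eq_inv_of_mul_eq_one_left ?_
  rw [← PowerSeries.coe_mul, PowerSeries.inv_mul_cancel _ (by simpa), PowerSeries.coe_one]

lemma coeff_zero_mul_X_inv_pow (φ : ℂ⟦X⟧) (d : ℕ) :
    ((φ : ℂ⸨X⸩) * ((X : ℂ⟦X⟧) : ℂ⸨X⸩)⁻¹ ^ d).coeff 0 = coeff d φ := by
  rw [PowerSeries.coe_X, HahnSeries.inv_single, HahnSeries.single_pow, HahnSeries.coeff_mul_single]
  simp [LaurentSeries.coeff_coe_powerSeries]

/-- The term `z ^ l * ∏ k, (l - α k) ^ (-p k)`, set to `0` at every `l = α k`, even where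
`p k = 0`. -/
noncomputable def poleTerm (z : ℂ) (α : ι → ℤ) (p : ι → ℕ) : ℤ → ℂ :=
  (Set.range α)ᶜ.indicator fun l ↦ z ^ l * ∏ k, (l - α k : ℂ)⁻¹ ^ p k

lemma poleTerm_of_forall_ne_zero (z : ℂ) (α : ι → ℤ) {p : ι → ℕ} (hp : ∀ k, p k ≠ 0) (l : ℤ) :
    poleTerm z α p l = z ^ l * ∏ k, (l - α k : ℂ)⁻¹ ^ p k := by
  refine Set.indicator_apply_eq_self.2 fun hl ↦ ?_
  obtain ⟨k, rfl⟩ := not_not.1 hl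
  rw [prod_eq_zero (mem_univ k) (by simp [hp k]), mul_zero]

variable [DecidableEq ι]

lemma residue_eq_coeff (Λ : ℂ⟦X⟧) {α : ι → ℤ} (hα : Function.Injective α) (p : ι → ℕ) (i : ι) :
    residue Λ α p i =
      coeff (p i) (Λ * ∏ k ∈ univ.erase i, (X + C (α i - α k : ℂ))⁻¹ ^ p k) := by
  have hinv : ∏ k ∈ univ.erase i, ((X + C (α i - α k : ℂ) : ℂ⟦X⟧) : ℂ⸨X⸩)⁻¹ ^ p k =
      ((∏ k ∈ univ.erase i, (X + C (α i - α k : ℂ))⁻¹ ^ p k : ℂ⟦X⟧) : ℂ⸨X⸩) := by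
    rw [map_prod]
    refine prod_congr rfl fun k hk ↦ ?_
    rw [map_pow, coe_inv_X_add_C]
    exact sub_ne_zero.2 <| Int.cast_injective.ne <| hα.ne (ne_of_mem_erase hk).symm
  rw [residue, ← prod_erase_mul _ _ (mem_univ i), hinv, sub_self, map_zero, add_zero, ← mul_assoc,
    ← PowerSeries.coe_mul, coeff_zero_mul_X_inv_pow]

lemma sub_mul_prod_inv_pow {K : Type*} [Field K] {u : ι → K} {j k : ι} (hj : u j ≠ 0)
    (hk : u k ≠ 0) (r : ι → ℕ) :
    (u j - u k) * ∏ h, (u h)⁻¹ ^ (r + (Pi.single j 1 + Pi.single k 1) : ι → ℕ) h =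
      ∏ h, (u h)⁻¹ ^ (r + Pi.single k 1 : ι → ℕ) h -
        ∏ h, (u h)⁻¹ ^ (r + Pi.single j 1 : ι → ℕ) h := by
  have hsingle (i : ι) : ∏ h, (u h)⁻¹ ^ (Pi.single i 1 : ι → ℕ) h = (u i)⁻¹ := by
    rw [prod_eq_single i] <;> simp +contextual
  simp only [Pi.add_apply, pow_add, prod_mul_distrib, hsingle]
  field_simp

lemma sub_mul_residue (Λ : ℂ⟦X⟧) (α : ι → ℤ) (r : ι → ℕ) (i j k : ι) :
    (α k - α j) * residue Λ α (r + (Pi.single j 1 + Pi.single k 1)) i =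
      residue Λ α (r + Pi.single k 1) i - residue Λ α (r + Pi.single j 1) i := by
  let u (h : ι) : ℂ⸨X⸩ := ((X + C (α i - α h : ℂ) : ℂ⟦X⟧) : ℂ⸨X⸩)
  have hu (h : ι) : u h ≠ 0 :=
    (map_ne_zero_iff _ HahnSeries.ofPowerSeries_injective).2 (X_add_C_ne_zero _)
  have hsub : u j - u k = HahnSeries.C (α k - α j : ℂ) := by
    rw [← PowerSeries.coe_sub, ← PowerSeries.coe_C, add_sub_add_left_eq_sub, ← map_sub]
    congr 2
    ring
  simp only [residue]
  rw [← HahnSeries.coeff_sub, ← mul_sub, ← sub_mul_prod_inv_pow (hu j) (hu k), hsub, mul_left_comm,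
    HahnSeries.C_mul_eq_smul, HahnSeries.coeff_smul, smul_eq_mul]

lemma residue_single (hΛ : constantCoeff Λ = -1) {α : ι → ℤ} (hα : Function.Injective α) (i k : ι)
    (d : ℕ) :
    residue Λ α (Pi.single i d) k = if k = i then coeff d Λ else -(1 / (α k - α i : ℂ) ^ d) := by
  rw [residue_eq_coeff Λ hα]
  split_ifs with hk
  · subst hk
    rw [prod_eq_one fun h hh ↦ by simp [(mem_erase.1 hh).1]]
    simp
  · rw [prod_eq_single_of_mem i (by simp [Ne.symm hk]) fun h _ hh ↦ by simp [hh]]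
    simp [hk, hΛ]

lemma sub_mul_poleTerm (z : ℂ) (α : ι → ℤ) (r : ι → ℕ) (j k : ι) (l : ℤ) :
    (α k - α j) * poleTerm z α (r + (Pi.single j 1 + Pi.single k 1)) l =
      poleTerm z α (r + Pi.single k 1) l - poleTerm z α (r + Pi.single j 1) l := by
  by_cases hl : l ∈ Set.range α
  · simp [poleTerm, hl]
  have hu (h : ι) : (l - α h : ℂ) ≠ 0 :=
    sub_ne_zero.2 <| Int.cast_injective.ne fun hlh ↦ hl ⟨h, hlh.symm⟩
  simp only [poleTerm, Set.indicator_of_mem (Set.mem_compl hl)]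
  rw [← mul_sub, ← sub_mul_prod_inv_pow (u := fun h ↦ (l - α h : ℂ)) (hu j) (hu k)]
  ring

lemma poleTerm_single (z : ℂ) {α : ι → ℤ} (hα : Function.Injective α) (i : ι) (d : ℕ)
    (l : ℤ) :
    poleTerm z α (Pi.single i d) l =
      z ^ l / (l - α i : ℂ) ^ d -
        ∑ k, if l = α k then z ^ α k / (α k - α i : ℂ) ^ d else 0 := by
  by_cases hl : l ∈ Set.range α
  · obtain ⟨k, rfl⟩ := hl
    simp [poleTerm, hα.eq_iff]
  · rw [sum_eq_zero fun k _ ↦ if_neg fun hk ↦ hl ⟨k, hk.symm⟩, poleTerm,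
      Set.indicator_of_mem (Set.mem_compl hl), prod_eq_single i] <;>
    simp +contextual [div_eq_mul_inv]

lemma hasSum_poleTerm_add {α : ι → ℤ} {r : ι → ℕ} {j k : ι} (hjk : α j ≠ α k)
    (hr : ∀ i, HasSum (poleTerm z α (r + Pi.single i 1))
      (∑ h, z ^ α h * residue Λ α (r + Pi.single i 1) h) (symmetricIcc ℤ)) :
    HasSum (poleTerm z α (r + (Pi.single j 1 + Pi.single k 1)))
      (∑ h, z ^ α h * residue Λ α (r + (Pi.single j 1 + Pi.single k 1)) h) (symmetricIcc ℤ) := by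
  have hne : (α k - α j : ℂ) ≠ 0 := sub_ne_zero.2 <| Int.cast_injective.ne hjk.symm
  rw [← hasSum_mul_left_iff hne]
  simpa only [sub_mul_poleTerm, mul_sum, mul_left_comm, sub_mul_residue, mul_sub,
    sum_sub_distrib] using (hr k).sub (hr j)

lemma tendsto_zpow_div_pow (hz : ‖z‖ = 1) {d : ℕ} (hd : d ≠ 0) :
    Tendsto (fun l : ℤ ↦ z ^ l / (l : ℂ) ^ d) cofinite (𝓝 0) := by
  rw [tendsto_zero_iff_norm_tendsto_zero]
  simp only [norm_div, norm_zpow, hz, one_zpow, norm_pow, Complex.norm_intCast, one_div,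
    ← Int.norm_eq_abs]
  rw [← cocompact_eq_cofinite]
  exact tendsto_inv_atTop_zero.comp <|
    (tendsto_pow_atTop hd).comp (tendsto_norm_cocompact_atTop (E := ℤ))

namespace IsLerchSeries

variable (hΛ : IsLerchSeries z Λ) {α : ι → ℤ} (hα : Function.Injective α)
include hΛ hα

lemma hasSum_poleTerm_single (i : ι) {d : ℕ} (hd : d ≠ 0) :
    HasSum (poleTerm z α (Pi.single i d)) (∑ k, z ^ α k * residue Λ α (Pi.single i d) k)
      (symmetricIcc ℤ) := by
  have hz : z ≠ 0 := norm_ne_zero_iff.1 (by simp [hΛ.norm_eq_one])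
  have hshift := (hasSum_symmetricIcc_comp_add_right (hΛ.hasSum d hd)
    (tendsto_zpow_div_pow hΛ.norm_eq_one hd) (-α i)).mul_left (z ^ α i)
  have hpoles : HasSum (fun l ↦ ∑ k, if l = α k then z ^ α k / (α k - α i : ℂ) ^ d else 0)
      (∑ k, z ^ α k / (α k - α i : ℂ) ^ d) (symmetricIcc ℤ) :=
    hasSum_sum fun k _ ↦ hasSum_ite_eq _ _ _
  convert! hshift.sub hpoles using 1
  · ext l
    rw [poleTerm_single z hα, mul_div_assoc', ← zpow_add₀ hz, add_comm, neg_add_cancel_right]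
    push_cast
    simp only [sub_eq_add_neg]
  · rw [eq_sub_iff_add_eq, ← sum_add_distrib]
    simp only [residue_single hΛ.constantCoeff_eq hα]
    rw [sum_eq_single i] <;> simp +contextual [hd, div_eq_mul_inv]

omit [DecidableEq ι] in
theorem hasSum_poleTerm {p : ι → ℕ} (hp : p ≠ 0) :
    HasSum (poleTerm z α p) (∑ k, z ^ α k * residue Λ α p k) (symmetricIcc ℤ) := by
  classical
  induction hn : ∑ i, p i using Nat.strong_induction_on generalizing p with
  | _ n ih =>
  subst hn
  by_cases h : ∃ j k, j ≠ k ∧ p j ≠ 0 ∧ p k ≠ 0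
  · obtain ⟨j, k, hjk, hj, hk⟩ := h
    have hle : Pi.single j 1 + Pi.single k 1 ≤ p := fun h ↦ by
      simp only [Pi.add_apply, Pi.single_apply]
      grind
    obtain ⟨r, rfl⟩ := le_iff_exists_add'.1 hle
    refine hasSum_poleTerm_add (hα.ne hjk) fun i ↦ ih _ ?_ (fun h ↦ ?_) rfl
    · simp [sum_add_distrib]
    · simpa using congrFun h i
  · obtain ⟨i, hi : p i ≠ 0⟩ := Function.ne_iff.1 hp
    have hsingle : p = Pi.single i (p i) := by
      ext k
      by_cases hk : k = i
      · rw [hk, Pi.single_eq_same]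
      · rw [Pi.single_eq_of_ne hk]
        grind
    rw [hsingle]
    exact hΛ.hasSum_poleTerm_single hα i hi

end IsLerchSeries

end Residues

section LerchValues

open PowerSeries Filter Topology SummationFilter

lemma I_zpow_eq_of_dvd_sub {k l : ℤ} (h : 4 ∣ k - l) : I ^ k = I ^ l := by
  obtain ⟨d, hd⟩ := h
  rw [sub_eq_iff_eq_add.1 hd, zpow_add₀ I_ne_zero, zpow_mul, show I ^ (4 : ℤ) = 1 from I_pow_four,
    one_zpow, one_mul]

lemma I_zpow_two_mul (k : ℤ) : I ^ (2 * k) = (-1) ^ k := by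
  rw [zpow_mul]
  exact congrArg (· ^ k) I_sq

lemma I_zpow_add_I_zpow_neg (n : ℕ) :
    I ^ (n : ℤ) + I ^ (-(n : ℤ)) = (if 4 ∣ n then 4 else 0) - if 2 ∣ n then 2 else 0 := by
  obtain ⟨k, rfl | rfl⟩ := n.even_or_odd'
  · have h4 : 4 ∣ 2 * k ↔ Even k := by
      rw [even_iff_two_dvd, show 4 = 2 * 2 from rfl, Nat.mul_dvd_mul_iff_left two_pos]
    rw [Nat.cast_mul, Nat.cast_ofNat, ← mul_neg, I_zpow_two_mul, I_zpow_two_mul]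
    rcases k.even_or_odd with hk | hk <;>
      norm_num [h4, hk, hk.neg_one_pow, Nat.not_even_iff_odd.2]
  · have hneg : I ^ (-((2 * k + 1 : ℕ) : ℤ)) = I ^ (((2 * k + 1 : ℕ) : ℤ) + 2) :=
      I_zpow_eq_of_dvd_sub (by lia)
    rw [if_neg (by lia), if_neg (by lia), sub_zero, hneg, zpow_add₀ I_ne_zero,
      show I ^ (2 : ℤ) = -1 from I_sq]
    ring

lemma hasSum_ite_dvd_div_pow {p : ℕ} (hp : 1 < p) {d : ℕ} (hd : d ≠ 0) :
    HasSum (fun n : ℕ ↦ (if d ∣ n then (d : ℂ) else 0) / n ^ p)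
      ((d : ℂ) ^ (1 - p : ℤ) * riemannZeta p) := by
  have hzeta : HasSum (fun n : ℕ ↦ 1 / (n : ℂ) ^ p) (riemannZeta p) := by
    rw [zeta_nat_eq_tsum_of_gt_one hp]
    refine Summable.hasSum <| .of_norm ?_
    simpa using Real.summable_nat_pow_inv.2 hp
  rw [← (mul_right_injective₀ hd).hasSum_iff]
  · convert! hzeta.mul_left ((d : ℂ) ^ (1 - p : ℤ)) using 2 with n
    rw [zpow_sub₀ (by simpa), zpow_one, zpow_natCast]
    simp [mul_pow, div_eq_mul_inv, mul_assoc, mul_comm]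
  · rintro n hn
    rw [if_neg, zero_div]
    rintro ⟨k, rfl⟩
    exact hn ⟨k, rfl⟩

lemma hasSum_I_zpow_div_pow_of_even {p : ℕ} (hp : Even p) (hp0 : p ≠ 0) :
    HasSum (fun l : ℤ ↦ I ^ l / (l : ℂ) ^ p) (LamI p) (symmetricIcc ℤ) := by
  have hp1 : 1 < p := by grind
  have hsum : Summable fun l : ℤ ↦ I ^ l / (l : ℂ) ^ p :=
    .of_norm <| (Real.summable_one_div_int_pow.2 hp1).norm.congr fun l ↦ by simp
  have hpair := hsum.hasSum.nat_add_neg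
  simp only [Int.cast_neg, Int.cast_natCast, hp.neg_pow, ← add_div, I_zpow_add_I_zpow_neg,
    sub_div] at hpair
  have heval : ∑' l : ℤ, I ^ l / (l : ℂ) ^ p = LamI p := by
    have h := hpair.unique
      ((hasSum_ite_dvd_div_pow hp1 (d := 4) (by simp)).sub
        (hasSum_ite_dvd_div_pow hp1 (d := 2) (by simp)))
    rw [LamI, if_pos hp]
    simp only [Int.cast_zero, zero_pow hp0, div_zero, add_zero] at h
    rw [h, Nat.cast_ofNat, show (4 : ℂ) = 2 * 2 by norm_num, mul_zpow, Nat.cast_ofNat]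
    ring
  exact heval ▸ hsum.hasSum.mono_left LeAtTop.le_atTop

lemma hasSum_Lchi4 {s : ℂ} (hs : 1 < s.re) :
    HasSum (fun m : ℕ ↦ (-1 : ℂ) ^ m * (2 * m + 1 : ℂ) ^ (-s)) (Lchi4 s) := by
  have hL : HasSum (LSeries.term (fun n ↦ chi4 n) s) (Lchi4 s) := by
    rw [Lchi4, DirichletCharacter.LFunction_eq_LSeries _ hs]
    exact (ZMod.LSeriesSummable_of_one_lt_re chi4 hs).LSeriesHasSum
  have hodd : Function.Injective fun m : ℕ ↦ 2 * m + 1 := fun m n h ↦ by simpa using h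
  rw [← hodd.hasSum_iff fun n hn ↦ ?_] at hL
  · convert! hL using 2 with m
    have hchi : chi4 ((2 * m + 1 : ℕ) : ZMod 4) = (-1) ^ m := by
      rw [chi4, MulChar.ringHomComp_apply, ZMod.χ₄_eq_neg_one_pow (by lia),
        show (2 * m + 1) / 2 = m by lia]
      simp
    rw [Function.comp_apply, LSeries.term_of_ne_zero (by lia), hchi, cpow_neg, div_eq_mul_inv]
    push_cast
    rfl
  · have hn2 : n % 2 = 0 := by
      by_contra h
      exact hn ⟨n / 2, by simp only; lia⟩
    rw [LSeries.term_def, chi4, MulChar.ringHomComp_apply, ZMod.χ₄_nat_eq_if_mod_four, if_pos hn2]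
    simp

lemma chi4_ne_one : chi4 ≠ 1 := fun h ↦ by
  have h3 := congrArg (fun χ : DirichletCharacter ℂ 4 ↦ χ ((3 : ℕ) : ZMod 4)) h
  have hunit : IsUnit ((3 : ℕ) : ZMod 4) := by decide
  rw [MulChar.one_apply hunit, chi4, MulChar.ringHomComp_apply,
    ZMod.χ₄_nat_three_mod_four rfl] at h3
  norm_num at h3

/-- The alternating series bound passes from `σ > 1` to `σ = 1` by continuity. -/
lemma norm_Lchi4_sub_sum_le {σ : ℝ} (hσ : 1 ≤ σ) (n : ℕ) :
    ‖Lchi4 σ - ∑ m ∈ range n, (-1 : ℂ) ^ m * (2 * m + 1 : ℂ) ^ (-σ : ℂ)‖ ≤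
      (2 * n + 1 : ℝ) ^ (-σ) := by
  have hcast (x : ℝ) (m : ℕ) : (-1 : ℂ) ^ m * (2 * m + 1 : ℂ) ^ (-x : ℂ) =
      (((-1) ^ m * (2 * m + 1 : ℝ) ^ (-x) : ℝ) : ℂ) := by
    push_cast [ofReal_cpow (by positivity : (0 : ℝ) ≤ 2 * m + 1)]
    rfl
  have hgt : ∀ x ∈ Set.Ioi (1 : ℝ),
      ‖Lchi4 x - ∑ m ∈ range n, (-1 : ℂ) ^ m * (2 * m + 1 : ℂ) ^ (-x : ℂ)‖ ≤
        (2 * n + 1 : ℝ) ^ (-x) := fun x hx ↦ by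
    have hL := hasSum_Lchi4 (s := x) (by simpa using hx)
    simp only [hcast] at hL ⊢
    have hsum := summable_ofReal.1 hL.summable
    rw [← hL.tsum_eq, ← ofReal_tsum, ← ofReal_sum, ← ofReal_sub, norm_real, Real.norm_eq_abs]
    refine alternating_series_error_bound _ (fun i j hij ↦ ?_) ?_ n
    · have : (0 : ℝ) < 2 * i + 1 := by positivity
      exact Real.rpow_le_rpow_of_nonpos this (by gcongr) (by linarith [hx.out])
    · exact .of_norm <| hsum.norm.congr fun m ↦ by simp
  refine le_on_closure hgt ?_ ?_ (by rwa [closure_Ioi, Set.mem_Ici])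
  · have hL : Continuous Lchi4 :=
      (DirichletCharacter.differentiable_LFunction chi4_ne_one).continuous
    refine ((hL.comp continuous_ofReal).sub ?_).norm.continuousOn
    simp only [hcast]
    fun_prop (disch := positivity)
  · have h : (2 * n + 1 : ℝ) ≠ 0 := by positivity
    fun_prop (disch := exact h)

lemma tendsto_sum_Lchi4 {σ : ℝ} (hσ : 1 ≤ σ) :
    Tendsto (fun n ↦ ∑ m ∈ range n, (-1 : ℂ) ^ m * (2 * m + 1 : ℂ) ^ (-σ : ℂ)) atTop
      (𝓝 (Lchi4 σ)) := by
  have hlin : Tendsto (fun n : ℕ ↦ (2 * n + 1 : ℝ)) atTop atTop :=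
    tendsto_atTop_add_const_right _ _ <| tendsto_natCast_atTop_atTop.const_mul_atTop two_pos
  rw [tendsto_iff_norm_sub_tendsto_zero]
  refine squeeze_zero (fun _ ↦ norm_nonneg _)
    (fun n ↦ (norm_sub_rev _ _).trans_le (norm_Lchi4_sub_sum_le hσ n))
    ((tendsto_rpow_neg_atTop (by linarith)).comp hlin)

lemma sum_I_zpow_div_pow_of_odd {p : ℕ} (hp : Odd p) (N : ℕ) :
    ∑ l ∈ Icc (-(N : ℤ)) N, I ^ l / (l : ℂ) ^ p =
      2 * I * ∑ m ∈ range ((N + 1) / 2), (-1) ^ m * (2 * m + 1 : ℂ) ^ (-p : ℂ) := by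
  induction N with
  | zero => simp [hp.pos.ne']
  | succ N ih =>
    push_cast
    rw [sum_Icc_succ_eq_add_endpoints, ih, Int.cast_neg, hp.neg_pow, div_neg, ← sub_eq_add_neg,
      ← sub_div]
    obtain ⟨k, rfl | rfl⟩ := N.even_or_odd'
    · have hneg : I ^ (-(((2 * k : ℕ) : ℤ) + 1)) = -I ^ (((2 * k : ℕ) : ℤ) + 1) := by
        rw [I_zpow_eq_of_dvd_sub (l := ((2 * k : ℕ) : ℤ) + 1 + 2) (by lia), zpow_add₀ I_ne_zero _ 2,
          show I ^ (2 : ℤ) = -1 from I_sq, mul_neg_one]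
      rw [hneg, show (2 * k + 1 + 1) / 2 = k + 1 by lia, show (2 * k + 1) / 2 = k by lia,
        sum_range_succ, zpow_add₀ I_ne_zero, Nat.cast_mul, Nat.cast_two, I_zpow_two_mul]
      simp only [cpow_neg, cpow_natCast, zpow_one, zpow_natCast]
      push_cast
      ring
    · have hneg : I ^ (-(((2 * k + 1 : ℕ) : ℤ) + 1)) = I ^ (((2 * k + 1 : ℕ) : ℤ) + 1) :=
        I_zpow_eq_of_dvd_sub (by lia)
      rw [hneg, show (2 * k + 1 + 1 + 1) / 2 = (2 * k + 1 + 1) / 2 by lia, sub_self, zero_div,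
        zero_add]

lemma hasSum_I_zpow_div_pow_of_odd {p : ℕ} (hp : Odd p) :
    HasSum (fun l : ℤ ↦ I ^ l / (l : ℂ) ^ p) (LamI p) (symmetricIcc ℤ) := by
  have hhalf : Tendsto (fun N ↦ (N + 1) / 2) atTop atTop :=
    tendsto_atTop_atTop.2 fun b ↦ ⟨2 * b, fun N hN ↦ by lia⟩
  have hL := (tendsto_sum_Lchi4 (σ := p) (mod_cast hp.pos)).comp hhalf
  simp only [ofReal_natCast, Function.comp_def] at hL
  rw [hasSum_symmetricIcc_iff, LamI, if_neg (Nat.not_even_iff_odd.2 hp)]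
  simpa only [sum_I_zpow_div_pow_of_odd hp] using hL.const_mul (2 * I)

theorem isLerchSeries_LamI : IsLerchSeries I (mk LamI) where
  norm_eq_one := norm_I
  constantCoeff_eq := by
    norm_num [← coeff_zero_eq_constantCoeff_apply, LamI, riemannZeta_zero]
  hasSum p hp := by
    rw [coeff_mk]
    rcases p.even_or_odd with h | h
    exacts [hasSum_I_zpow_div_pow_of_even h hp, hasSum_I_zpow_div_pow_of_odd h]

end LerchValues

section PartialFractions

/-- The terms in `x` of the partial fraction expansion of `x ^ (p + 1) * y ^ (c + 1)`, where
`x * y = u * (x + y)`; for instance `x = 1 / (t + α)`, `y = 1 / (β - t)` and `u = 1 / (α + β)`. -/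
def partialFraction {R : Type*} [CommSemiring R] (u x : R) (p c : ℕ) : R :=
  ∑ ω ∈ antidiagonal p, (c + ω.2).choose c * u ^ (c + ω.2 + 1) * x ^ (ω.1 + 1)

lemma partialFraction_zero_left {R : Type*} [CommSemiring R] (u x : R) (c : ℕ) :
    partialFraction u x 0 c = u ^ (c + 1) * x := by
  simp [partialFraction]

lemma partialFraction_succ_zero {R : Type*} [CommSemiring R] (u x : R) (p : ℕ) :
    partialFraction u x (p + 1) 0 = u * (x ^ (p + 2) + partialFraction u x p 0) := by
  simp only [partialFraction, Nat.sum_antidiagonal_succ', mul_add, mul_sum]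
  congr 1
  · simp
  · refine sum_congr rfl fun ω _ ↦ ?_
    simp only [Nat.choose_zero_right]
    ring

lemma partialFraction_succ_succ {R : Type*} [CommSemiring R] (u x : R) (p c : ℕ) :
    partialFraction u x (p + 1) (c + 1) =
      u * (partialFraction u x p (c + 1) + partialFraction u x (p + 1) c) := by
  simp only [partialFraction, Nat.sum_antidiagonal_succ', mul_add, mul_sum]
  rw [add_left_comm, ← sum_add_distrib]
  congr 1
  · simp only [add_zero, Nat.choose_self]
    ring
  · refine sum_congr rfl fun ω _ ↦ ?_
    rw [add_right_comm c 1 (ω.2 + 1), add_right_comm c 1 ω.2, Nat.choose_succ_succ',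
      add_assoc c ω.2 1]
    push_cast
    ring

theorem pow_mul_pow_eq_partialFraction_add {R : Type*} [CommRing R] {u x y : R}
    (h : x * y = u * (x + y)) (p c : ℕ) :
    x ^ (p + 1) * y ^ (c + 1) = partialFraction u x p c + partialFraction u y c p := by
  induction p generalizing c with
  | zero =>
    induction c with
    | zero => simp only [partialFraction_zero_left]; linear_combination h
    | succ c ih =>
      rw [partialFraction_succ_zero]
      rw [partialFraction_zero_left] at ih ⊢
      linear_combination y ^ (c + 1) * h + u * ih
  | succ p ihp =>
    induction c with
    | zero =>
      have ih := ihp 0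
      rw [partialFraction_succ_zero]
      rw [partialFraction_zero_left] at ih ⊢
      linear_combination x ^ (p + 1) * h + u * ih
    | succ c ihc =>
      rw [partialFraction_succ_succ, partialFraction_succ_succ]
      linear_combination x ^ (p + 1) * y ^ (c + 1) * h + u * ihp (c + 1) + u * ihc

end PartialFractions

section Coefficients

open PowerSeries

lemma coeff_inv_X_add_C_pow {r : ℂ} (hr : r ≠ 0) (d k : ℕ) :
    coeff k ((X + C r)⁻¹ ^ d) = (-1) ^ k * (k + d - 1).choose k / r ^ (d + k) := by
  obtain _ | d := d
  · obtain _ | k := k <;> simp [coeff_one]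
  have hscale : X + C r = C r * rescale (-r⁻¹) (1 - X) := by
    rw [map_sub, map_one, rescale_X, mul_sub, ← mul_assoc, ← map_mul]
    simp [hr, add_comm]
  have hinv : (X + C r)⁻¹ ^ (d + 1) =
      C (r⁻¹ ^ (d + 1)) * rescale (-r⁻¹) (mk fun n ↦ ((d + n).choose d : ℂ)) := by
    have hcancel : (X + C r)⁻¹ ^ (d + 1) * (X + C r) ^ (d + 1) = 1 := by
      rw [← mul_pow, PowerSeries.inv_mul_cancel _ (by simpa), one_pow]
    have hmk : C (r⁻¹ ^ (d + 1)) * rescale (-r⁻¹) (mk fun n ↦ ((d + n).choose d : ℂ)) *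
        (X + C r) ^ (d + 1) = 1 := by
      rw [hscale, mul_pow, mul_mul_mul_comm, ← map_pow, ← map_mul, ← map_pow, ← map_mul,
        mk_add_choose_mul_one_sub_pow_eq_one, ← mul_pow, inv_mul_cancel₀ hr]
      simp
    exact mul_right_cancel₀ (pow_ne_zero _ (X_add_C_ne_zero r)) (hcancel.trans hmk.symm)
  rw [hinv, coeff_C_mul, coeff_rescale, coeff_mk, Nat.choose_symm_add, neg_pow,
    show k + (d + 1) - 1 = d + k by lia, inv_pow, inv_pow, pow_add _ (d + 1)]
  field_simp

lemma coeff_inv_X_add_C_neg_pow {r : ℂ} (hr : r ≠ 0) (d k : ℕ) :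
    coeff k ((X + C (-r))⁻¹ ^ d) = (-1) ^ d * (k + d - 1).choose k / r ^ (d + k) := by
  rw [coeff_inv_X_add_C_pow (neg_ne_zero.2 hr), neg_pow r, pow_add]
  field_simp
  rw [← pow_mul, even_two.mul_left d |>.neg_one_pow, mul_one]

lemma coeff_inv_X_add_C_pow_succ {r : ℂ} (hr : r ≠ 0) (d k : ℕ) :
    coeff k ((X + C r)⁻¹ ^ (d + 1)) = (-1) ^ k * (d + k).choose d / r ^ (k + d + 1) := by
  rw [coeff_inv_X_add_C_pow hr, Nat.choose_symm_add, show k + (d + 1) - 1 = d + k by lia,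
    show d + 1 + k = k + d + 1 by lia]

lemma coeff_neg_inv_X_add_C_neg_pow_succ {r : ℂ} (hr : r ≠ 0) (d k : ℕ) :
    coeff k ((-(X + C (-r))⁻¹) ^ (d + 1)) = (d + k).choose d / r ^ (k + d + 1) := by
  rw [neg_pow, ← map_one C, ← map_neg, ← map_pow, coeff_C_mul, coeff_inv_X_add_C_neg_pow hr,
    Nat.choose_symm_add, show k + (d + 1) - 1 = d + k by lia, mul_div_assoc, ← mul_assoc,
    pow_mul_pow_eq_one _ (by norm_num), one_mul, show d + 1 + k = k + d + 1 by lia]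

variable (Λ : ℂ⟦X⟧) (p a c : ℕ) {m n N : ℂ}

lemma coeff_mul_pow_mul_pow (hm : m ≠ 0) (hN : N ≠ 0) (hc : 0 < c) :
    coeff p (Λ * ((X + C m)⁻¹ ^ a * (X + C N)⁻¹ ^ c)) =
      (-1) ^ p * ∑ j ∈ range (p + 1), (-1) ^ j * coeff j Λ *
        ∑ ω ∈ range (p - j + 1),
          ((ω + a - 1).choose ω : ℂ) * ((p + c - j - ω - 1).choose (c - 1) : ℂ) *
            ((m ^ (a + ω))⁻¹ * (N ^ (p + c - j - ω))⁻¹) := by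
  simp only [coeff_mul, Nat.sum_antidiagonal_eq_sum_range_succ_mk, coeff_inv_X_add_C_pow hm,
    coeff_inv_X_add_C_pow hN, mul_sum]
  refine sum_congr rfl fun j hj ↦ sum_congr rfl fun ω hω ↦ ?_
  obtain ⟨u, rfl⟩ : ∃ u, p = j + ω + u := ⟨p - j - ω, by grind⟩
  rw [show j + ω + u - j - ω = u by lia, show j + ω + u + c - j - ω - 1 = u + c - 1 by lia,
    show j + ω + u + c - j - ω = c + u by lia, ← Nat.choose_symm (by lia : u ≤ u + c - 1),
    show u + c - 1 - u = c - 1 by lia, pow_add, pow_add]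
  linear_combination (-coeff j Λ * (-1) ^ ω * (-1) ^ u * ((ω + a - 1).choose ω : ℂ) *
    ((u + c - 1).choose (c - 1) : ℂ) * ((m ^ (a + ω))⁻¹ * (N ^ (c + u))⁻¹)) *
      pow_mul_pow_eq_one j (by norm_num : (-1 : ℂ) * -1 = 1)

lemma coeff_mul_pow_neg_mul_pow_neg (hn : n ≠ 0) (hN : N ≠ 0) (hp : 0 < p) :
    coeff c (Λ * ((X + C (-n))⁻¹ ^ a * (X + C (-N))⁻¹ ^ p)) =
      (-1) ^ (p + a) * ∑ j ∈ range (c + 1), coeff j Λ *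
        ∑ ω ∈ range (c - j + 1),
          ((ω + a - 1).choose ω : ℂ) * ((p + c - j - ω - 1).choose (p - 1) : ℂ) *
            ((n ^ (a + ω))⁻¹ * (N ^ (p + c - j - ω))⁻¹) := by
  simp only [coeff_mul, Nat.sum_antidiagonal_eq_sum_range_succ_mk, coeff_inv_X_add_C_neg_pow hn,
    coeff_inv_X_add_C_neg_pow hN, mul_sum]
  refine sum_congr rfl fun j hj ↦ sum_congr rfl fun ω hω ↦ ?_
  obtain ⟨u, rfl⟩ : ∃ u, c = j + ω + u := ⟨c - j - ω, by grind⟩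
  rw [show j + ω + u - j - ω = u by lia, show p + (j + ω + u) - j - ω - 1 = u + p - 1 by lia,
    show p + (j + ω + u) - j - ω = p + u by lia, ← Nat.choose_symm (by lia : u ≤ u + p - 1),
    show u + p - 1 - u = p - 1 by lia]
  ring

lemma coeff_mul_partialFraction (k : ℕ) (x : ℂ⟦X⟧) :
    coeff k (Λ * partialFraction (C N⁻¹) x p c) =
      ∑ j ∈ range (k + 1), coeff j Λ * ∑ ω ∈ range (p + 1),
        ((p + c - ω).choose c : ℂ) * coeff (k - j) (x ^ (ω + 1)) * (N ^ (p + c + 1 - ω))⁻¹ := by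
  simp only [PowerSeries.coeff_mul _ Λ, Nat.sum_antidiagonal_eq_sum_range_succ_mk,
    partialFraction, map_sum]
  refine sum_congr rfl fun j _ ↦ congrArg (coeff j Λ * ·) <| sum_congr rfl fun ω hω ↦ ?_
  have hω : ω ≤ p := by grind
  rw [← map_pow, ← map_natCast (C (R := ℂ)), ← map_mul, coeff_C_mul,
    show c + (p - ω) = p + c - ω by lia, show p + c - ω + 1 = p + c + 1 - ω by lia, inv_pow]
  ring

lemma pow_neg_mul_pow_eq_partialFraction_add (hm : m ≠ 0) (hn : n ≠ 0) (hN : m + n ≠ 0) :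
    (X + C (-m))⁻¹ ^ (p + 1) * (X + C n)⁻¹ ^ (c + 1) =
      C ((-1) ^ (p + 1)) * (partialFraction (C (m + n)⁻¹) (-(X + C (-m))⁻¹) p c +
        partialFraction (C (m + n)⁻¹) (X + C n)⁻¹ c p) := by
  have hm' := PowerSeries.mul_inv_cancel (X + C (-m)) (by simpa)
  have hn' := PowerSeries.mul_inv_cancel (X + C n) (by simpa)
  have hN' : C (m + n)⁻¹ * (C m + C n) = (1 : ℂ⟦X⟧) := by
    rw [← map_add, ← map_mul, inv_mul_cancel₀ hN, map_one]
  have hrel : -(X + C (-m))⁻¹ * (X + C n)⁻¹ =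
      C (m + n)⁻¹ * (-(X + C (-m))⁻¹ + (X + C n)⁻¹) := by
    rw [map_neg] at hm' ⊢
    linear_combination (C (m + n)⁻¹ * (X + C n)⁻¹) * hm' -
      (C (m + n)⁻¹ * (X + -C m)⁻¹) * hn' + (X + -C m)⁻¹ * (X + C n)⁻¹ * hN'
  rw [← pow_mul_pow_eq_partialFraction_add hrel, ← mul_assoc, map_pow, ← mul_pow, map_neg C 1,
    map_one, neg_mul_neg, one_mul]

lemma coeff_mul_pow_neg_mul_pow (hm : m ≠ 0) (hn : n ≠ 0) (hN : m + n ≠ 0) (hp : 0 < p)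
    (hc : 0 < c) :
    coeff a (Λ * ((X + C (-m))⁻¹ ^ p * (X + C n)⁻¹ ^ c)) =
      (-1) ^ p * ∑ j ∈ range (a + 1), coeff j Λ *
        ∑ ω ∈ range p,
          ((ω + a - j).choose ω : ℂ) * ((p + c - 2 - ω).choose (c - 1) : ℂ) *
            ((m ^ (a - j + ω + 1))⁻¹ * ((m + n) ^ (p + c - 1 - ω))⁻¹) +
      (-1) ^ (p + a) * ∑ j ∈ range (a + 1), (-1) ^ j * coeff j Λ *
        ∑ ω ∈ range c,
          ((ω + a - j).choose ω : ℂ) * ((p + c - 2 - ω).choose (p - 1) : ℂ) *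
            ((n ^ (a - j + ω + 1))⁻¹ * ((m + n) ^ (p + c - 1 - ω))⁻¹) := by
  obtain ⟨p, rfl⟩ := Nat.exists_eq_add_one.2 hp
  obtain ⟨c, rfl⟩ := Nat.exists_eq_add_one.2 hc
  rw [pow_neg_mul_pow_eq_partialFraction_add _ _ hm hn hN, mul_left_comm, coeff_C_mul,
    mul_add Λ, map_add, coeff_mul_partialFraction, coeff_mul_partialFraction, mul_add]
  congr 1
  · refine congrArg _ <| sum_congr rfl fun j hj ↦ congrArg _ <| sum_congr rfl fun ω _ ↦ ?_
    rw [coeff_neg_inv_X_add_C_neg_pow_succ hm, show p + 1 + (c + 1) - 2 = p + c by lia,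
      show p + 1 + (c + 1) - 1 = p + c + 1 by lia, show ω + (a - j) = ω + a - j by grind,
      Nat.add_sub_cancel]
    ring
  · rw [mul_sum, mul_sum]
    refine sum_congr rfl fun j hj ↦ ?_
    have hsign : (-1 : ℂ) ^ (p + 1 + a) * (-1) ^ j = (-1) ^ (p + 1) * (-1) ^ (a - j) := by
      rw [← pow_add, ← pow_add, show p + 1 + a + j = p + 1 + (a - j) + 2 * j by grind, pow_add,
        (even_two_mul j).neg_one_pow, mul_one]
    rw [← mul_assoc, ← mul_assoc, ← mul_assoc, hsign, mul_sum, mul_sum]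
    refine sum_congr rfl fun ω _ ↦ ?_
    rw [coeff_inv_X_add_C_pow_succ hn, show p + 1 + (c + 1) - 2 = c + p by lia,
      show p + 1 + (c + 1) - 1 = c + p + 1 by lia, show ω + (a - j) = ω + a - j by grind,
      Nat.add_sub_cancel]
    ring

end Coefficients

section Summability

lemma summable_mul_add_shear {κ G : Type*} [AddGroup G] {v : κ → ℝ} {u : G → ℝ} (hv : Summable v)
    (hu : Summable u) (hv0 : 0 ≤ v) (hu0 : 0 ≤ u) (e : κ → G) :
    Summable fun t : κ × G ↦ v t.1 * (u t.2 + u (t.2 + e t.1)) := by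
  have hprod := hv.mul_of_nonneg hu hv0 hu0
  have hshear : Function.Injective fun t : κ × G ↦ (t.1, t.2 + e t.1) := by
    rintro ⟨k, g⟩ ⟨k', g'⟩ h
    obtain ⟨rfl, h⟩ := Prod.mk.inj h
    exact congrArg _ (add_right_cancel h)
  simpa only [mul_add, Function.comp_def] using hprod.add (hprod.comp_injective hshear)

lemma norm_inv_intCast_pow_le_one (k : ℤ) (p : ℕ) : ‖((k : ℂ) ^ p)⁻¹‖ ≤ 1 := by
  rcases eq_or_ne k 0 with rfl | hk
  · obtain _ | p := p <;> simp
  · rw [norm_inv, norm_pow, norm_intCast]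
    exact inv_le_one_of_one_le₀ (one_le_pow₀ (mod_cast Int.one_le_abs hk))

lemma norm_inv_pow_mul_inv_pow_le (k l : ℤ) {p q : ℕ} (hp : 0 < p) (hq : 0 < q) :
    ‖((k : ℂ) ^ p)⁻¹ * ((l : ℂ) ^ q)⁻¹‖ ≤ 1 / (k : ℝ) ^ 2 + 1 / (l : ℝ) ^ 2 := by
  have hle (k : ℤ) {p : ℕ} (hp : 0 < p) : ‖((k : ℂ) ^ p)⁻¹‖ ≤ ‖(k : ℂ)⁻¹‖ := by
    rw [← inv_pow, norm_pow]
    exact pow_le_of_le_one (norm_nonneg _) (by simpa using norm_inv_intCast_pow_le_one k 1) hp.ne'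
  have hsq (k : ℤ) : 1 / (k : ℝ) ^ 2 = ‖(k : ℂ)⁻¹‖ ^ 2 := by
    rw [norm_inv, norm_intCast, inv_pow, sq_abs, one_div]
  rw [norm_mul, hsq, hsq]
  calc _ ≤ ‖(k : ℂ)⁻¹‖ * ‖(l : ℂ)⁻¹‖ := by gcongr <;> apply hle <;> assumption
    _ ≤ _ := by nlinarith [two_mul_le_add_sq ‖(k : ℂ)⁻¹‖ ‖(l : ℂ)⁻¹‖, norm_nonneg (k : ℂ)⁻¹,
      norm_nonneg (l : ℂ)⁻¹]

end Summability

section Tornheim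

/-- The summand of `T p s q x y` at `(m, n)`, where `t = (m, n - 1)`. For `p, q > 0` the convention
`0⁻¹ = 0` drops the terms with `m = 0` or `m + n = 0`, as the definition of `T` does. -/
noncomputable def tornheimTerm (p : ℕ) (s : ℂ) (q : ℕ) (x y : ℂ) (t : ℤ × ℕ) : ℂ :=
  x ^ t.1 * y ^ (t.2 + 1) *
    (((t.1 : ℂ) ^ p)⁻¹ * (((t.2 + 1 : ℕ) : ℂ) ^ s)⁻¹ * (((t.1 + t.2 + 1 : ℤ) : ℂ) ^ q)⁻¹)

variable {p q : ℕ} {s x y : ℂ}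

lemma tornheimTerm_eq_zero (hp : 0 < p) (hq : 0 < q) {t : ℤ × ℕ}
    (ht : t.1 = 0 ∨ t.1 + t.2 + 1 = 0) : tornheimTerm p s q x y t = 0 := by
  rcases ht with h | h <;> simp [tornheimTerm, h, hp.ne', hq.ne']

lemma tornheimTerm_mul_congr (hp : 0 < p) (hq : 0 < q) {t : ℤ × ℕ} {u v : ℂ}
    (h : t.1 ≠ 0 → t.1 + t.2 + 1 ≠ 0 → u = v) :
    tornheimTerm p s q x y t * u = tornheimTerm p s q x y t * v := by
  by_cases ht : t.1 = 0 ∨ t.1 + t.2 + 1 = 0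
  · rw [tornheimTerm_eq_zero hp hq ht, zero_mul, zero_mul]
  · rw [not_or] at ht
    rw [h ht.1 ht.2]

variable (hp : 0 < p) (hs : 1 < s.re) (hq : 0 < q) (hx : ‖x‖ = 1) (hy : ‖y‖ = 1)

include hp hs hq hx hy

lemma summable_tornheimTerm : Summable (tornheimTerm p s q x y) := by
  have hv : Summable fun k : ℕ ↦ ((k + 1 : ℝ) ^ s.re)⁻¹ := by
    simpa using (summable_nat_add_iff 1).2 (Real.summable_nat_rpow_inv.2 hs)
  have hu : Summable fun l : ℤ ↦ 1 / (l : ℝ) ^ 2 := Real.summable_one_div_int_pow.2 one_lt_two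
  have hbound := summable_mul_add_shear hv hu (fun k ↦ by positivity) (fun l ↦ by positivity)
    fun k ↦ (k + 1 : ℤ)
  refine .of_norm_bounded ((Equiv.prodComm _ _).summable_iff.2 hbound) fun t ↦ ?_
  have hn : ‖((t.2 + 1 : ℕ) : ℂ) ^ s‖ = (t.2 + 1 : ℝ) ^ s.re := by
    rw [norm_natCast_cpow_of_pos t.2.succ_pos]
    push_cast
    rfl
  have hmN := norm_inv_pow_mul_inv_pow_le t.1 (t.1 + t.2 + 1) hp hq
  rw [tornheimTerm, norm_mul, norm_mul, norm_zpow, norm_pow, hx, hy, one_zpow, one_pow, one_mul,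
    one_mul, mul_right_comm, mul_comm, norm_mul, norm_inv, hn]
  simpa [add_assoc] using
    mul_le_mul_of_nonneg_left hmN (by positivity : 0 ≤ ((t.2 + 1 : ℝ) ^ s.re)⁻¹)

lemma hasSum_tornheimTerm : HasSum (tornheimTerm p s q x y) (T p s q x y) := by
  convert! (summable_tornheimTerm hp hs hq hx hy).hasSum using 1
  refine tsum_congr fun t ↦ ?_
  rw [tornheimTerm]
  split_ifs with h
  · rw [div_eq_mul_inv, mul_inv, mul_inv]
  · rw [not_and_or, not_not, not_not, ← add_assoc] at h
    rcases h with h | h <;> simp [h, hp.ne', hq.ne']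

lemma hasSum_tornheimTerm_mul (e f g : ℕ) {p' q' : ℕ} {s' : ℂ} (hp' : p' = p + e)
    (hs' : s' = s + f) (hq' : q' = q + g) :
    HasSum (fun t ↦ tornheimTerm p s q x y t * (((t.1 : ℂ) ^ e)⁻¹ * (((t.2 + 1 : ℕ) : ℂ) ^ f)⁻¹ *
      (((t.1 + t.2 + 1 : ℤ) : ℂ) ^ g)⁻¹)) (T p' s' q' x y) := by
  subst hp' hs' hq'
  convert! hasSum_tornheimTerm (p := p + e) (s := s + f) (q := q + g) (by lia)
    (by simpa using hs.trans_le (by simp)) (by lia) hx hy using 2 with t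
  rw [tornheimTerm, tornheimTerm, cpow_add _ _ (Nat.cast_ne_zero.2 t.2.succ_ne_zero), cpow_natCast]
  ring

end Tornheim

section TornheimCoefficients

open PowerSeries

lemma hasSum_mul_sum_mul_sum {ι : Type*} {v : ι → ℂ} {J : ℕ} {K : ℕ → ℕ} (ε : ℂ) (A : ℕ → ℂ)
    (B : ℕ → ℕ → ℂ) {S : ℕ → ℕ → ℂ} {F : ℕ → ℕ → ι → ℂ}
    (h : ∀ j < J, ∀ ω < K j, HasSum (fun t ↦ v t * F j ω t) (S j ω)) :
    HasSum (fun t ↦ v t * (ε * ∑ j ∈ range J, A j * ∑ ω ∈ range (K j), B j ω * F j ω t))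
      (ε * ∑ j ∈ range J, A j * ∑ ω ∈ range (K j), B j ω * S j ω) := by
  have hsum := hasSum_sum fun j hj ↦ (hasSum_sum fun ω hω ↦
    (h j (mem_range.1 hj) ω (mem_range.1 hω)).mul_left (B j ω)).mul_left (A j)
  refine (hsum.mul_left ε).congr_fun fun t ↦ ?_
  simp only [mul_sum]
  exact sum_congr rfl fun j _ ↦ sum_congr rfl fun ω _ ↦ by ring

variable (Λ : ℂ⟦X⟧) {p q a b c : ℕ} {s x y : ℂ} (hq : 0 < q) (hb : 0 < b) (hs : 1 < s.re)
  (hx : ‖x‖ = 1) (hy : ‖y‖ = 1)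

include hq hb hs hx hy

lemma hasSum_tornheimTerm_mul_inv_fst_pow (e g : ℕ) {P Q : ℕ} (hP : P = q + e) (hQ : Q = b + g) :
    HasSum (fun t ↦ tornheimTerm q s b x y t *
      (((t.1 : ℂ) ^ e)⁻¹ * (((t.1 + t.2 + 1 : ℤ) : ℂ) ^ g)⁻¹)) (T P s Q x y) := by
  simpa using hasSum_tornheimTerm_mul hq hs hb hx hy e 0 g hP (s' := s) (by simp) hQ

lemma hasSum_tornheimTerm_mul_inv_snd_pow (f g : ℕ) {S : ℂ} {Q : ℕ} (hS : S = s + f)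
    (hQ : Q = b + g) :
    HasSum (fun t ↦ tornheimTerm q s b x y t *
      ((((t.2 + 1 : ℕ) : ℂ) ^ f)⁻¹ * (((t.1 + t.2 + 1 : ℤ) : ℂ) ^ g)⁻¹)) (T q S Q x y) := by
  simpa using hasSum_tornheimTerm_mul hq hs hb hx hy 0 f g (p' := q) (by simp) hS hQ

lemma hasSum_tornheimTerm_mul_coeff_pow_mul_pow (hc : 0 < c) :
    HasSum (fun t ↦ tornheimTerm q s b x y t * coeff p (Λ * ((X + C (t.1 : ℂ))⁻¹ ^ a *
        (X + C ((t.1 + t.2 + 1 : ℤ) : ℂ))⁻¹ ^ c)))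
      ((-1) ^ p * ∑ j ∈ range (p + 1), (-1) ^ j * coeff j Λ * ∑ ω ∈ range (p - j + 1),
        ((ω + a - 1).choose ω : ℂ) * ((p + c - j - ω - 1).choose (c - 1) : ℂ) *
          T (q + a + ω) s (p + b + c - j - ω) x y) := by
  have hsum := hasSum_mul_sum_mul_sum (J := p + 1) (K := (p - · + 1)) ((-1) ^ p)
    (fun j ↦ (-1) ^ j * coeff j Λ)
    (fun j ω ↦ ((ω + a - 1).choose ω : ℂ) * ((p + c - j - ω - 1).choose (c - 1) : ℂ))
    fun j _ ω _ ↦ hasSum_tornheimTerm_mul_inv_fst_pow hq hb hs hx hy (a + ω) (p + c - j - ω)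
      (P := q + a + ω) (Q := p + b + c - j - ω) (by lia) (by lia)
  exact hsum.congr_fun fun t ↦ tornheimTerm_mul_congr hq hb fun hm hN ↦
    coeff_mul_pow_mul_pow Λ p a c (Int.cast_ne_zero.2 hm) (Int.cast_ne_zero.2 hN) hc

lemma hasSum_tornheimTerm_mul_coeff_pow_neg_mul_pow_neg (hp : 0 < p) :
    HasSum (fun t ↦ tornheimTerm q s b x y t * coeff c (Λ * ((X + C (-(t.2 + 1 : ℕ) : ℂ))⁻¹ ^ a *
        (X + C (-(t.1 + t.2 + 1 : ℤ) : ℂ))⁻¹ ^ p)))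
      ((-1) ^ (p + a) * ∑ j ∈ range (c + 1), coeff j Λ * ∑ ω ∈ range (c - j + 1),
        ((ω + a - 1).choose ω : ℂ) * ((p + c - j - ω - 1).choose (p - 1) : ℂ) *
          T q (s + a + ω) (p + b + c - j - ω) x y) := by
  have hsum := hasSum_mul_sum_mul_sum (J := c + 1) (K := (c - · + 1)) ((-1) ^ (p + a))
    (fun j ↦ coeff j Λ)
    (fun j ω ↦ ((ω + a - 1).choose ω : ℂ) * ((p + c - j - ω - 1).choose (p - 1) : ℂ))
    fun j _ ω _ ↦ hasSum_tornheimTerm_mul_inv_snd_pow hq hb hs hx hy (a + ω) (p + c - j - ω)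
      (S := s + a + ω) (Q := p + b + c - j - ω) (by push_cast; ring) (by lia)
  exact hsum.congr_fun fun t ↦ tornheimTerm_mul_congr hq hb fun _ hN ↦
    coeff_mul_pow_neg_mul_pow_neg Λ p a c (Nat.cast_ne_zero.2 t.2.succ_ne_zero)
      (Int.cast_ne_zero.2 hN) hp

lemma hasSum_tornheimTerm_mul_coeff_pow_neg_mul_pow (hp : 0 < p) (hc : 0 < c) :
    HasSum (fun t ↦ tornheimTerm q s b x y t * coeff a (Λ * ((X + C (-t.1 : ℂ))⁻¹ ^ p *
        (X + C ((t.2 + 1 : ℕ) : ℂ))⁻¹ ^ c)))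
      ((-1) ^ p * ∑ j ∈ range (a + 1), coeff j Λ * ∑ ω ∈ range p,
        ((ω + a - j).choose ω : ℂ) * ((p + c - 2 - ω).choose (c - 1) : ℂ) *
          T (q + a - j + ω + 1) s (p + b + c - 1 - ω) x y +
      (-1) ^ (p + a) * ∑ j ∈ range (a + 1), (-1) ^ j * coeff j Λ * ∑ ω ∈ range c,
        ((ω + a - j).choose ω : ℂ) * ((p + c - 2 - ω).choose (p - 1) : ℂ) *
          T q (s + ((a - j : ℕ) : ℂ) + ω + 1) (p + b + c - 1 - ω) x y) := by
  have hleft := hasSum_mul_sum_mul_sum (J := a + 1) (K := fun _ ↦ p) ((-1) ^ p)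
    (fun j ↦ coeff j Λ)
    (fun j ω ↦ ((ω + a - j).choose ω : ℂ) * ((p + c - 2 - ω).choose (c - 1) : ℂ))
    fun j _ ω _ ↦ hasSum_tornheimTerm_mul_inv_fst_pow hq hb hs hx hy (a - j + ω + 1)
      (p + c - 1 - ω) (P := q + a - j + ω + 1) (Q := p + b + c - 1 - ω) (by lia) (by lia)
  have hright := hasSum_mul_sum_mul_sum (J := a + 1) (K := fun _ ↦ c) ((-1) ^ (p + a))
    (fun j ↦ (-1) ^ j * coeff j Λ)
    (fun j ω ↦ ((ω + a - j).choose ω : ℂ) * ((p + c - 2 - ω).choose (p - 1) : ℂ))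
    fun j _ ω _ ↦ hasSum_tornheimTerm_mul_inv_snd_pow hq hb hs hx hy (a - j + ω + 1)
      (p + c - 1 - ω) (S := s + ((a - j : ℕ) : ℂ) + ω + 1) (Q := p + b + c - 1 - ω)
        (by push_cast; ring) (by lia)
  refine (hleft.add hright).congr_fun fun t ↦ ?_
  rw [← mul_add]
  refine tornheimTerm_mul_congr hq hb fun hm hN ↦ ?_
  have hmn : (t.1 : ℂ) + (t.2 + 1 : ℕ) = (t.1 + t.2 + 1 : ℤ) := by push_cast; ring
  rw [← hmn]
  exact coeff_mul_pow_neg_mul_pow Λ p a c (Int.cast_ne_zero.2 hm)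
    (Nat.cast_ne_zero.2 t.2.succ_ne_zero) (hmn ▸ Int.cast_ne_zero.2 hN) hp hc

end TornheimCoefficients

section LatticeSum

open PowerSeries SummationFilter

/-- The summand of the sum over all of `ℤ × ℤ × ℕ` that extends the sum defining
`Zlam3 p q s a b c`: at `t = ((m, n - 1), l)` it is
`i^(l + 2m + 3n) / (l^p m^q n^s (l+m)^a (m+n)^b (l+m+n)^c)`. For positive exponents the convention
`x / 0 = 0` removes the points where a linear form vanishes. -/
noncomputable def latticeTerm (p q a b c : ℕ) (s : ℂ) (t : (ℤ × ℕ) × ℤ) : ℂ :=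
  I ^ (t.2 + 2 * t.1.1 + 3 * (t.1.2 + 1 : ℤ)) /
    ((t.2 : ℂ) ^ p * (t.1.1 : ℂ) ^ q * ((t.1.2 + 1 : ℕ) : ℂ) ^ s * ((t.2 + t.1.1 : ℤ) : ℂ) ^ a *
      ((t.1.1 + t.1.2 + 1 : ℤ) : ℂ) ^ b * ((t.2 + t.1.1 + t.1.2 + 1 : ℤ) : ℂ) ^ c)

variable {p q a b c : ℕ} {s : ℂ}

lemma latticeTerm_eq_tornheimTerm_mul (t : ℤ × ℕ) (l : ℤ) :
    latticeTerm p q a b c s (t, l) = tornheimTerm q s b (-1) (-I) t *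
      (I ^ l * (((l : ℂ) ^ p)⁻¹ * (((l + t.1 : ℤ) : ℂ) ^ a)⁻¹ *
        (((l + t.1 + t.2 + 1 : ℤ) : ℂ) ^ c)⁻¹)) := by
  have hI : I ^ (l + 2 * t.1 + 3 * (t.2 + 1 : ℤ)) = (-1) ^ t.1 * (-I) ^ (t.2 + 1) * I ^ l := by
    have h3 : I ^ (3 * (t.2 + 1 : ℤ)) = (-I) ^ (t.2 + 1) := by
      rw [zpow_mul, ← I_pow_three, ← zpow_natCast]
      push_cast
      rfl
    rw [zpow_add₀ I_ne_zero, zpow_add₀ I_ne_zero, I_zpow_two_mul, h3]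
    ring
  rw [latticeTerm, tornheimTerm, hI]
  simp only [div_eq_mul_inv, mul_inv]
  ring

lemma tornheimTerm_mul_I_zpow_neg_fst (t : ℤ × ℕ) :
    tornheimTerm q s b (-1) (-I) t * I ^ (-t.1) = tornheimTerm q s b I (-I) t := by
  have h : (-1) ^ t.1 * I ^ (-t.1) = I ^ t.1 := by
    rw [← I_zpow_two_mul, ← zpow_add₀ I_ne_zero]
    ring_nf
  rw [tornheimTerm, tornheimTerm, ← h]
  ring

lemma tornheimTerm_mul_I_zpow_neg_snd (t : ℤ × ℕ) :
    tornheimTerm q s b I (-I) t * I ^ (-(t.2 + 1 : ℤ)) = tornheimTerm q s b I (-1) t := by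
  have h : (-I) ^ (t.2 + 1) * I ^ (-(t.2 + 1 : ℤ)) = (-1) ^ (t.2 + 1) := by
    rw [zpow_neg, ← Nat.cast_add_one, zpow_natCast, ← div_eq_mul_inv, ← div_pow, neg_div,
      div_self I_ne_zero]
  rw [tornheimTerm, tornheimTerm, ← h]
  ring

lemma hasSum_latticeTerm_fiber {Λ : ℂ⟦X⟧} (hΛ : IsLerchSeries I Λ) (hp : 0 < p) (hq : 0 < q)
    (ha : 0 < a) (hb : 0 < b) (hc : 0 < c) (t : ℤ × ℕ) :
    HasSum (fun l ↦ latticeTerm p q a b c s (t, l))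
      (tornheimTerm q s b (-1) (-I) t * coeff p (Λ * ((X + C (t.1 : ℂ))⁻¹ ^ a *
        (X + C ((t.1 + t.2 + 1 : ℤ) : ℂ))⁻¹ ^ c)) +
      tornheimTerm q s b I (-I) t * coeff a (Λ * ((X + C (-t.1 : ℂ))⁻¹ ^ p *
        (X + C ((t.2 + 1 : ℕ) : ℂ))⁻¹ ^ c)) +
      tornheimTerm q s b I (-1) t * coeff c (Λ * ((X + C (-(t.2 + 1 : ℕ) : ℂ))⁻¹ ^ a *
        (X + C (-(t.1 + t.2 + 1 : ℤ) : ℂ))⁻¹ ^ p))) (symmetricIcc ℤ) := by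
  obtain ⟨m, k⟩ := t
  simp only [latticeTerm_eq_tornheimTerm_mul]
  by_cases ht : m = 0 ∨ m + k + 1 = 0
  · simp [tornheimTerm_eq_zero (t := (m, k)) hq hb ht, hasSum_zero]
  rw [not_or] at ht
  have hα : Function.Injective ![0, -m, -(m + k + 1)] := by
    intro i j
    fin_cases i <;> fin_cases j <;> simp <;> lia
  have hpole := (hΛ.hasSum_poleTerm hα (p := ![p, a, c]) fun h ↦ hp.ne' (congrFun h 0)).mul_left
    (tornheimTerm q s b (-1) (-I) (m, k))
  convert! hpole using 1
  · ext l
    rw [poleTerm_of_forall_ne_zero _ _ (by simp [Fin.forall_fin_succ, hp.ne', ha.ne', hc.ne'])]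
    simp only [Fin.prod_univ_three, Matrix.cons_val_zero, Matrix.cons_val_one, Matrix.cons_val,
      inv_pow]
    push_cast
    ring_nf
  · have h0 : univ.erase (0 : Fin 3) = {1, 2} := rfl
    have h1 : univ.erase (1 : Fin 3) = {0, 2} := rfl
    have h2 : univ.erase (2 : Fin 3) = {1, 0} := by decide
    have hI : I ^ (-(m + k + 1)) = I ^ (-m) * I ^ (-(k + 1 : ℤ)) := by
      rw [← zpow_add₀ I_ne_zero]
      ring_nf
    simp only [Fin.sum_univ_three, residue_eq_coeff Λ hα, h0, h1, h2]
    rw [prod_pair (by decide), prod_pair (by decide), prod_pair (by decide)]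
    simp only [Matrix.cons_val_zero, Matrix.cons_val_one, Matrix.cons_val, hI, zpow_zero, one_mul]
    rw [mul_add, mul_add, ← mul_assoc _ (I ^ (-m)), ← mul_assoc _ (I ^ (-m) * _),
      ← mul_assoc _ (I ^ (-m)), tornheimTerm_mul_I_zpow_neg_fst (t := (m, k)),
      tornheimTerm_mul_I_zpow_neg_snd (t := (m, k))]
    push_cast
    ring_nf

end LatticeSum

section Chambers

/-- The positive coroots of `SU(4)`, as linear forms in the values `l`, `m`, `n` of the simple ones,
listed in the order of the arguments of `Zlam3`. -/
def rootForms (l m n : ℤ) : Fin 6 → ℤ := ![l, m, n, l + m, m + n, l + m + n]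

/-- The points of `ℤ × ℤ × ℕ` at which no linear form in `latticeTerm` vanishes, parametrised by
twelve copies of the summation range of `Zlam3`. Writing `l = x₁ - x₂`, `m = x₂ - x₃` and
`n = x₃ - x₄`, the twelve copies are the orderings of `x₁`, `x₂`, `x₃`, `x₄` with `x₃ > x₄`, and the
parameters are the gaps between neighbours, each diminished by one. -/
def chamber : Fin 12 × (ℕ × ℕ × ℕ) → (ℤ × ℕ) × ℤ
  | (0, x, y, z) => ((y + 1, z), x + 1)
  | (1, x, y, z) => ((x + y + 2, z), -(x + 1))
  | (2, x, y, z) => ((x + 1, y + z + 1), -(x + y + 2))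
  | (3, x, y, z) => ((x + 1, y), -(x + y + z + 3))
  | (4, x, y, z) => ((-(y + 1), y + z + 1), x + y + 2)
  | (5, x, y, z) => ((-(y + z + 2), y), x + y + z + 3)
  | (6, x, y, z) => ((-(x + y + 2), x + y + z + 2), y + 1)
  | (7, x, y, z) => ((-(x + y + z + 3), x + y + 1), y + z + 2)
  | (8, x, y, z) => ((-(x + y + z + 3), x), z + 1)
  | (9, x, y, z) => ((-(x + 1), x + y + z + 2), -(y + 1))
  | (10, x, y, z) => ((-(x + 1), x + y + 1), -(y + z + 2))
  | (11, x, y, z) => ((-(x + y + 2), x), -(z + 1))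

/-- `chamberPerm i j` is the coroot that restricts to the `j`-th one on the `i`-th chamber,
up to sign. -/
def chamberPerm : Fin 12 → Fin 6 → Fin 6 :=
  ![![0, 1, 2, 3, 4, 5], ![0, 3, 2, 1, 5, 4], ![1, 3, 5, 0, 2, 4], ![1, 2, 5, 4, 3, 0],
    ![3, 1, 4, 0, 2, 5], ![3, 2, 4, 5, 1, 0], ![3, 0, 4, 1, 5, 2], ![3, 5, 4, 2, 0, 1],
    ![2, 5, 0, 3, 4, 1], ![1, 0, 5, 3, 4, 2], ![1, 4, 5, 2, 0, 3], ![2, 4, 0, 1, 5, 3]]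

/-- The sign of the `j`-th coroot on the `i`-th chamber. -/
def chamberSign : Fin 12 → Fin 6 → ℤˣ :=
  ![![1, 1, 1, 1, 1, 1], ![-1, 1, 1, 1, 1, 1], ![-1, 1, 1, -1, 1, 1], ![-1, 1, 1, -1, 1, -1],
    ![1, -1, 1, 1, 1, 1], ![1, -1, 1, 1, -1, 1], ![1, -1, 1, -1, 1, 1], ![1, -1, 1, -1, -1, 1],
    ![1, -1, 1, -1, -1, -1], ![-1, -1, 1, -1, 1, 1], ![-1, -1, 1, -1, 1, -1],
    ![-1, -1, 1, -1, -1, -1]]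

lemma chamberPerm_bijective (i : Fin 12) : Function.Bijective (chamberPerm i) := by
  decide +revert

lemma chamberSign_two (i : Fin 12) : chamberSign i 2 = 1 := by
  decide +revert

lemma chamber_injective : Function.Injective chamber := by
  rintro ⟨i, x, y, z⟩ ⟨j, x', y', z'⟩ h
  fin_cases i <;> fin_cases j <;> simp only [chamber, Prod.mk.injEq] at h ⊢ <;>
    first
    | omega
    | exact ⟨trivial, by omega, by omega, by omega⟩

lemma mem_range_chamber {l m : ℤ} {k : ℕ} (h : ∀ j, rootForms l m (k + 1) j ≠ 0) :
    ((m, k), l) ∈ Set.range chamber := by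
  obtain ⟨hl, hm, -, hlm, hmn, hlmn⟩ : l ≠ 0 ∧ m ≠ 0 ∧ (k + 1 : ℤ) ≠ 0 ∧ l + m ≠ 0 ∧
      m + (k + 1) ≠ 0 ∧ l + m + (k + 1) ≠ 0 := by
    simpa [rootForms, Fin.forall_fin_succ] using h
  have mem (i : Fin 12) (x y z : ℤ) (h : chamber (i, x.toNat, y.toNat, z.toNat) = ((m, k), l)) :
      ((m, k), l) ∈ Set.range chamber := ⟨_, h⟩
  rcases hl.lt_or_gt with hl | hl <;> rcases hm.lt_or_gt with hm | hm
  · rcases hmn.lt_or_gt with hmn | hmn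
    · exact mem 11 k (-m - k - 2) (-l - 1) (by simp only [chamber, Prod.mk.injEq]; lia)
    rcases hlmn.lt_or_gt with hlmn | hlmn
    · exact mem 10 (-m - 1) (k + m) (-l - (k + m) - 2) (by simp only [chamber, Prod.mk.injEq]; lia)
    · exact mem 9 (-m - 1) (-l - 1) (k + m + l) (by simp only [chamber, Prod.mk.injEq]; lia)
  · rcases hlm.lt_or_gt with hlm | hlm
    · rcases hlmn.lt_or_gt with hlmn | hlmn
      · exact mem 3 (m - 1) k (-l - m - k - 2) (by simp only [chamber, Prod.mk.injEq]; lia)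
      · exact mem 2 (m - 1) (-l - m - 1) (k + l + m) (by simp only [chamber, Prod.mk.injEq]; lia)
    · exact mem 1 (-l - 1) (m + l - 1) k (by simp only [chamber, Prod.mk.injEq]; lia)
  · rcases hlm.lt_or_gt with hlm | hlm <;> rcases hmn.lt_or_gt with hmn | hmn
    · rcases hlmn.lt_or_gt with hlmn | hlmn
      · exact mem 8 k (-m - k - l - 2) (l - 1) (by simp only [chamber, Prod.mk.injEq]; lia)
      · exact mem 7 (-m - l - 1) (k + m + l) (-m - k - 2)
          (by simp only [chamber, Prod.mk.injEq]; lia)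
    · exact mem 6 (-m - l - 1) (l - 1) (k + m) (by simp only [chamber, Prod.mk.injEq]; lia)
    · exact mem 5 (l + m - 1) k (-m - k - 2) (by simp only [chamber, Prod.mk.injEq]; lia)
    · exact mem 4 (l + m - 1) (-m - 1) (k + m) (by simp only [chamber, Prod.mk.injEq]; lia)
  · exact mem 0 (l - 1) (m - 1) k (by simp only [chamber, Prod.mk.injEq]; lia)

lemma rootForms_chamber (i : Fin 12) (t : ℕ × ℕ × ℕ) (j : Fin 6) :
    rootForms (chamber (i, t)).2 (chamber (i, t)).1.1 ((chamber (i, t)).1.2 + 1) (chamberPerm i j) =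
      chamberSign i (chamberPerm i j) * rootForms (t.1 + 1) (t.2.1 + 1) (t.2.2 + 1) j := by
  fin_cases i <;> fin_cases j <;>
    simp [rootForms, chamber, chamberPerm, chamberSign] <;> ring

lemma four_dvd_weight_chamber_sub (i : Fin 12) (t : ℕ × ℕ × ℕ) :
    (4 : ℤ) ∣ ((chamber (i, t)).2 + 2 * (chamber (i, t)).1.1 + 3 * ((chamber (i, t)).1.2 + 1)) -
      ((t.1 + 1) + 2 * (t.2.1 + 1) + 3 * (t.2.2 + 1)) := by
  obtain ⟨x, y, z⟩ := t
  fin_cases i <;> simp only [chamber] <;> lia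

section Terms

variable {p q a b c : ℕ} {s : ℂ}

lemma latticeTerm_eq_div_prod (t : (ℤ × ℕ) × ℤ) :
    latticeTerm p q a b c s t = I ^ (t.2 + 2 * t.1.1 + 3 * (t.1.2 + 1 : ℤ)) /
      ∏ j, (rootForms t.2 t.1.1 (t.1.2 + 1) j : ℂ) ^ (![(p : ℂ), q, s, a, b, c] j) := by
  simp [latticeTerm, Fin.prod_univ_six, rootForms, add_assoc]

lemma Zlam3_eq_tsum_div_prod (κ : Fin 6 → ℂ) :
    Zlam3 (κ 0) (κ 1) (κ 2) (κ 3) (κ 4) (κ 5) =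
      ∑' t : ℕ × ℕ × ℕ, I ^ ((t.1 + 1) + 2 * (t.2.1 + 1) + 3 * (t.2.2 + 1) : ℤ) /
        ∏ j, (rootForms (t.1 + 1) (t.2.1 + 1) (t.2.2 + 1) j : ℂ) ^ κ j := by
  refine tsum_congr fun t ↦ ?_
  simp only [Fin.prod_univ_six, rootForms, ← zpow_natCast]
  push_cast
  rfl

lemma inv_intUnit_mul_cpow_natCast (ε : ℤˣ) (r : ℂ) (n : ℕ) :
    (((ε : ℤ) * r : ℂ) ^ (n : ℂ))⁻¹ = (ε : ℤ) ^ n * (r ^ (n : ℂ))⁻¹ := by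
  rw [cpow_natCast, cpow_natCast, mul_pow, mul_inv]
  rcases Int.units_eq_one_or ε with rfl | rfl <;> simp [← inv_pow]

lemma latticeTerm_chamber (i : Fin 12) (t : ℕ × ℕ × ℕ) :
    latticeTerm p q a b c s (chamber (i, t)) =
      ((chamberSign i 0 : ℤ) ^ p * (chamberSign i 1 : ℤ) ^ q * (chamberSign i 3 : ℤ) ^ a *
        (chamberSign i 4 : ℤ) ^ b * (chamberSign i 5 : ℤ) ^ c) *
      (I ^ ((t.1 + 1) + 2 * (t.2.1 + 1) + 3 * (t.2.2 + 1) : ℤ) /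
        ∏ j, (rootForms (t.1 + 1) (t.2.1 + 1) (t.2.2 + 1) j : ℂ) ^
          (![(p : ℂ), q, s, a, b, c] (chamberPerm i j))) := by
  obtain ⟨R, hR⟩ := (chamberPerm_bijective i).injective.surjective_comp_right
    (rootForms (t.1 + 1) (t.2.1 + 1) (t.2.2 + 1))
  replace hR (j : Fin 6) : R (chamberPerm i j) = _ := congrFun hR j
  have hforms (j : Fin 6) : rootForms (chamber (i, t)).2 (chamber (i, t)).1.1
      ((chamber (i, t)).1.2 + 1) j = chamberSign i j * R j := by
    obtain ⟨j, rfl⟩ := (chamberPerm_bijective i).surjective j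
    rw [rootForms_chamber, hR]
  simp only [← hR]
  rw [latticeTerm_eq_div_prod, I_zpow_eq_of_dvd_sub (four_dvd_weight_chamber_sub i t),
    (chamberPerm_bijective i).prod_comp fun j ↦ (R j : ℂ) ^ ![(p : ℂ), q, s, a, b, c] j]
  simp only [hforms, Int.cast_mul, Fin.prod_univ_six, div_eq_mul_inv, mul_inv,
    Matrix.cons_val_zero, Matrix.cons_val_one, Matrix.cons_val, inv_intUnit_mul_cpow_natCast,
    chamberSign_two, Units.val_one, Int.cast_one, one_mul]
  ring

lemma tsum_latticeTerm_chamber (i : Fin 12) :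
    ∑' t, latticeTerm p q a b c s (chamber (i, t)) =
      ((chamberSign i 0 : ℤ) ^ p * (chamberSign i 1 : ℤ) ^ q * (chamberSign i 3 : ℤ) ^ a *
        (chamberSign i 4 : ℤ) ^ b * (chamberSign i 5 : ℤ) ^ c) *
      let κ : Fin 6 → ℂ := fun j ↦ ![(p : ℂ), q, s, a, b, c] (chamberPerm i j)
      Zlam3 (κ 0) (κ 1) (κ 2) (κ 3) (κ 4) (κ 5) := by
  simp only [latticeTerm_chamber, tsum_mul_left, Zlam3_eq_tsum_div_prod fun j ↦
    ![(p : ℂ), q, s, a, b, c] (chamberPerm i j)]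

lemma support_latticeTerm_subset (hp : 0 < p) (hq : 0 < q) (ha : 0 < a) (hb : 0 < b)
    (hc : 0 < c) : Function.support (latticeTerm p q a b c s) ⊆ Set.range chamber := by
  refine fun t ht ↦ mem_range_chamber fun j hj ↦ ht ?_
  rw [latticeTerm_eq_div_prod, prod_eq_zero (mem_univ j), div_zero]
  rw [hj, Int.cast_zero]
  by_cases h2 : j = 2
  · subst h2
    simp only [rootForms, Matrix.cons_val] at hj
    lia
  · refine zero_cpow ?_
    fin_cases j <;> simp [hp.ne', hq.ne', ha.ne', hb.ne', hc.ne'] at h2 ⊢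

lemma Scomb_Zlam3_eq_tsum_latticeTerm (hp : 0 < p) (hq : 0 < q) (ha : 0 < a) (hb : 0 < b)
    (hc : 0 < c) (h : Summable (latticeTerm p q a b c s)) :
    Scomb Zlam3 p q a b c s = ∑' t, latticeTerm p q a b c s t := by
  have hchambers : Summable fun u ↦ latticeTerm p q a b c s (chamber u) :=
    h.comp_injective chamber_injective
  rw [← chamber_injective.tsum_eq (support_latticeTerm_subset hp hq ha hb hc),
    hchambers.tsum_prod, tsum_fintype]
  simp only [tsum_latticeTerm_chamber, Fin.sum_univ_succ, Fin.sum_univ_zero]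
  simp only [Scomb, chamberSign, chamberPerm, Matrix.cons_val', Matrix.cons_val_fin_one,
    Matrix.cons_val_zero, Matrix.cons_val_one, Matrix.cons_val, Fin.succ_zero_eq_one,
    Fin.succ_one_eq_two, Fin.reduceSucc, Units.val_one, Units.val_neg, Int.cast_one, Int.cast_neg,
    one_pow, one_mul, mul_one, add_zero, pow_add]
  ring

end Terms

end Chambers

section FiberSums

open PowerSeries SummationFilter

variable {p q a b c : ℕ} {s : ℂ} (hp : 0 < p) (hq : 0 < q) (ha : 0 < a) (hb : 0 < b)
  (hs : 1 < s.re)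

include hp hq ha hb hs in
lemma summable_latticeTerm : Summable (latticeTerm p q a b c s) := by
  have htornheim := (summable_tornheimTerm hq hs hb (x := -1) (y := -I) (by simp) (by simp)).norm
  have hu : Summable fun l : ℤ ↦ 1 / (l : ℝ) ^ 2 := Real.summable_one_div_int_pow.2 one_lt_two
  refine .of_norm_bounded (summable_mul_add_shear htornheim hu (fun _ ↦ norm_nonneg _)
    (fun _ ↦ by positivity) Prod.fst) fun ⟨t, l⟩ ↦ ?_
  rw [latticeTerm_eq_tornheimTerm_mul, norm_mul, norm_mul (I ^ l), norm_zpow, norm_I, one_zpow,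
    one_mul, norm_mul]
  gcongr
  exact (mul_le_of_le_one_right (norm_nonneg _) (norm_inv_intCast_pow_le_one _ c)).trans
    (norm_inv_pow_mul_inv_pow_le _ _ hp ha)

include hp hq hb hs in
lemma hasSum_J3 (hc : 0 < c) :
    HasSum (fun t : ℤ × ℕ ↦
      tornheimTerm q s b (-1) (-I) t * coeff p (mk LamI * ((X + C (t.1 : ℂ))⁻¹ ^ a *
        (X + C ((t.1 + t.2 + 1 : ℤ) : ℂ))⁻¹ ^ c)) +
      tornheimTerm q s b I (-I) t * coeff a (mk LamI * ((X + C (-t.1 : ℂ))⁻¹ ^ p *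
        (X + C ((t.2 + 1 : ℕ) : ℂ))⁻¹ ^ c)) +
      tornheimTerm q s b I (-1) t * coeff c (mk LamI * ((X + C (-(t.2 + 1 : ℕ) : ℂ))⁻¹ ^ a *
        (X + C (-(t.1 + t.2 + 1 : ℤ) : ℂ))⁻¹ ^ p))) (J3 p q a b c s) := by
  have hnegone : ‖(-1 : ℂ)‖ = 1 := by simp
  have hnegI : ‖-I‖ = 1 := by simp
  have h₁ := hasSum_tornheimTerm_mul_coeff_pow_mul_pow (p := p) (a := a) (mk LamI) hq hb hs
    hnegone hnegI hc
  have h₂ := hasSum_tornheimTerm_mul_coeff_pow_neg_mul_pow (a := a) (mk LamI) hq hb hs norm_I hnegI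
    hp hc
  have h₃ := hasSum_tornheimTerm_mul_coeff_pow_neg_mul_pow_neg (a := a) (c := c) (mk LamI) hq hb hs
    norm_I hnegone hp
  convert! (h₁.add h₂).add h₃ using 1
  simp only [J3, coeff_mk]
  ring

end FiberSums

/-- Functional relation for `ζ₃(·,λ₃∨;SU(4))`
(Theorem 7.3, second relation, of Komori–Matsumoto–Tsumura). -/
theorem functional_relation_SU4_lam3 (p q a b c : ℕ) (hp : 0 < p) (hq : 0 < q) (ha : 0 < a)
    (hb : 0 < b) (hc : 0 < c) (s : ℂ) (hs : 1 < s.re) :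
    Scomb Zlam3 p q a b c s = J3 p q a b c s := by
  have hsummable := summable_latticeTerm (c := c) hp hq ha hb hs
  rw [Scomb_Zlam3_eq_tsum_latticeTerm hp hq ha hb hc hsummable]
  refine (hsummable.hasSum.prod_fiberwise fun t ↦ ?_).unique (hasSum_J3 hp hq hb hs hc)
  have hfiber := (hsummable.prod_factor t).hasSum
  have hsymm : HasSum _ _ (.symmetricIcc ℤ) :=
    hfiber.mono_left SummationFilter.LeAtTop.le_atTop
  rwa [hsymm.unique (hasSum_latticeTerm_fiber isLerchSeries_LamI hp hq ha hb hc t)] at hfiber
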